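/- Every unitary operator on an infinite-dimensional complex Hilbert space H is a product of four symmetries, each of which can moreover be chosen so that both of its eigenspaces (for eigenvalues 1 and −1) are infinite-dimensional. -/

import Mathlib

/-!
Split `H` into a `ℤ`-indexed Hilbert sum of copies `V n : G →ₗᵢ H` of one infinite-dimensional
space `G`, each with range reducing `u`, so that `u ∘ V n = V n ∘ T n` with `T n` unitary on `G`.
Choose unitaries `d n` of `G` with `d (n + 1) = T (n + 1) * d n`. The copies `V' n = V n ∘ d n` form
a Hilbert sum too, and the shifts `W : V n x ↦ V (n + 1) x` and `W' : V' n x ↦ V' (n + 1) x` satisfy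
`u * W = W'`. The translation `n ↦ n + 1` of `ℤ` is the composite of the reflections `n ↦ -1 - n`
and `n ↦ -n`, and a nontrivial involution permuting the copies is a symmetry with both eigenspaces
infinite-dimensional. Thus `W`, `W'` are each a product of two such symmetries, and `u = W' * W⁻¹`
is a product of four.

The copies are obtained by grouping cyclic subspaces for the functional calculus of `u`. A maximal
orthogonal family of these is infinite: if the spectrum is finite each of them is
finite-dimensional, and if not there are infinitely many functions with disjoint supports on it.
-/

open Submodule Set
open scoped InnerProductSpace

section BalancedSymmetry

variable {𝕜 E : Type*} [NormedField 𝕜] [SeminormedAddCommGroup E] [NormedSpace 𝕜 E]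

/-- A symmetry, i.e. an isometric involution, whose eigenspaces for `1` and `-1` are both
infinite-dimensional. The eigenspaces are written as the kernels of `s - id` and `s + id`. -/
structure IsBalancedSymmetry (s : E ≃ₗᵢ[𝕜] E) : Prop where
  mul_self : s * s = 1
  not_finiteDimensional_ker_sub :
    ¬ FiniteDimensional 𝕜 (LinearMap.ker ((s.toLinearEquiv : E →ₗ[𝕜] E) - LinearMap.id))
  not_finiteDimensional_ker_add :
    ¬ FiniteDimensional 𝕜 (LinearMap.ker ((s.toLinearEquiv : E →ₗ[𝕜] E) + LinearMap.id))

theorem isBalancedSymmetry_of_disjoint {s : E ≃ₗᵢ[𝕜] E} (hs : s * s = 1) {K L : Submodule 𝕜 E}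
    (hKL : Disjoint K L) (hK : ¬ FiniteDimensional 𝕜 K) (hmap : ∀ x ∈ K, s x ∈ L) :
    IsBalancedSymmetry s := by
  have hss (x : E) : s (s x) = x := congrArg (fun f : E ≃ₗᵢ[𝕜] E => f x) hs
  -- `x ↦ x + s x` and `x ↦ x - s x` embed `K` into the two eigenspaces.
  refine ⟨hs, fun hfin => hK ?_, fun hfin => hK ?_⟩
  · let f : K →ₗ[𝕜] LinearMap.ker ((s.toLinearEquiv : E →ₗ[𝕜] E) - LinearMap.id) :=
      ((LinearMap.id + (s.toLinearEquiv : E →ₗ[𝕜] E)).domRestrict K).codRestrict _ fun x => by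
        simp [LinearMap.mem_ker, hss, add_comm]
    refine FiniteDimensional.of_injective f ((injective_iff_map_eq_zero f).2 fun x hx => ?_)
    have hx : (x : E) = -s x := eq_neg_of_add_eq_zero_left (congrArg Subtype.val hx)
    exact Subtype.ext (disjoint_def.1 hKL x x.2 (hx ▸ L.neg_mem (hmap x x.2)))
  · let f : K →ₗ[𝕜] LinearMap.ker ((s.toLinearEquiv : E →ₗ[𝕜] E) + LinearMap.id) :=
      ((LinearMap.id - (s.toLinearEquiv : E →ₗ[𝕜] E)).domRestrict K).codRestrict _ fun x => by
        simp [LinearMap.mem_ker, hss]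
    refine FiniteDimensional.of_injective f ((injective_iff_map_eq_zero f).2 fun x hx => ?_)
    have hx : (x : E) = s x := sub_eq_zero.1 (congrArg Subtype.val hx)
    exact Subtype.ext (disjoint_def.1 hKL x x.2 (hx ▸ hmap x x.2))

end BalancedSymmetry

section HilbertSum

variable {𝕜 H ι ι' : Type*} [RCLike 𝕜] [NormedAddCommGroup H] [InnerProductSpace 𝕜 H]
  [CompleteSpace H]

section

variable {G : ι → Type*} [∀ i, NormedAddCommGroup (G i)] [∀ i, InnerProductSpace 𝕜 (G i)]
  {V : ∀ i, G i →ₗᵢ[𝕜] H}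

theorem linearIsometryEquiv_ext_of_isHilbertSum (hV : IsHilbertSum 𝕜 G V)
    {F : Type*} [NormedAddCommGroup F] [NormedSpace 𝕜 F] {f g : H ≃ₗᵢ[𝕜] F}
    (h : ∀ i x, f (V i x) = g (V i x)) : f = g := by
  ext x
  obtain ⟨w, rfl⟩ := hV.linearIsometryEquiv.symm.surjective x
  have hw := hV.hasSum_linearIsometryEquiv_symm w
  have hf := hw.map f f.continuous
  have hg := hw.map g g.continuous
  simp only [Function.comp_def, h] at hf hg
  exact hf.unique hg

theorem isHilbertSum_comp_equiv [∀ i, CompleteSpace (G i)] (hV : IsHilbertSum 𝕜 G V)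
    (π : ι' ≃ ι) {G' : ι' → Type*} [∀ i, NormedAddCommGroup (G' i)]
    [∀ i, InnerProductSpace 𝕜 (G' i)] [∀ i, CompleteSpace (G' i)]
    (T : ∀ i, G' i ≃ₗᵢ[𝕜] G (π i)) :
    IsHilbertSum 𝕜 G' fun i => (V (π i)).comp (T i).toLinearIsometry := by
  refine IsHilbertSum.mk
    (fun i j hij x y => hV.OrthogonalFamily (π.injective.ne hij) (T i x) (T j y)) ?_
  have hrange (i : ι') :
      LinearMap.range ((V (π i)).comp (T i).toLinearIsometry).toLinearMap =
        LinearMap.range (V (π i)).toLinearMap :=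
    LinearMap.range_comp_of_range_eq_top _ (T i).toLinearEquiv.range
  simp_rw [hrange]
  rw [π.iSup_comp (g := fun i => LinearMap.range (V i).toLinearMap),
    ← hV.OrthogonalFamily.range_linearIsometry]
  exact (LinearMap.range_eq_top.2 hV.surjective_isometry).ge

end

variable {G : Type*} [NormedAddCommGroup G] [InnerProductSpace 𝕜 G] [CompleteSpace G]
  {V : ι → G →ₗᵢ[𝕜] H}

/-- The unitary that permutes the summands of a Hilbert sum of copies of one space `G`: it carries
the copy indexed by `i` onto the one indexed by `π i`. -/
noncomputable def permuteSummands (hV : IsHilbertSum 𝕜 (fun _ : ι => G) V) (π : Equiv.Perm ι) :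
    H ≃ₗᵢ[𝕜] H :=
  hV.linearIsometryEquiv.trans
    (isHilbertSum_comp_equiv hV π fun _ => .refl 𝕜 G).linearIsometryEquiv.symm

variable (hV : IsHilbertSum 𝕜 (fun _ : ι => G) V)

@[simp]
theorem permuteSummands_apply (π : Equiv.Perm ι) (i : ι) (x : G) :
    permuteSummands hV π (V i x) = V (π i) x := by
  classical
  rw [← hV.linearIsometryEquiv_symm_apply_single x, permuteSummands,
    LinearIsometryEquiv.trans_apply, LinearIsometryEquiv.apply_symm_apply,
    IsHilbertSum.linearIsometryEquiv_symm_apply_single]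
  rfl

theorem permuteSummands_mul (π σ : Equiv.Perm ι) :
    permuteSummands hV (π * σ) = permuteSummands hV π * permuteSummands hV σ :=
  linearIsometryEquiv_ext_of_isHilbertSum hV fun i x => by
    simp only [LinearIsometryEquiv.coe_mul, Function.comp_apply, permuteSummands_apply,
      Equiv.Perm.mul_apply]

theorem permuteSummands_one : permuteSummands hV 1 = 1 :=
  linearIsometryEquiv_ext_of_isHilbertSum hV fun i x => permuteSummands_apply hV 1 i x

theorem isBalancedSymmetry_permuteSummands (hG : ¬ FiniteDimensional 𝕜 G) {π : Equiv.Perm ι}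
    (hπ : π * π = 1) {i : ι} (hi : π i ≠ i) : IsBalancedSymmetry (permuteSummands hV π) := by
  refine isBalancedSymmetry_of_disjoint (K := LinearMap.range (V i).toLinearMap)
    (L := LinearMap.range (V (π i)).toLinearMap) ?_ (IsOrtho.disjoint ?_) (fun hfin => hG ?_) ?_
  · rw [← permuteSummands_mul, hπ, permuteSummands_one]
  · exact isOrtho_iff_inner_eq.2 (by
      rintro _ ⟨x, rfl⟩ _ ⟨y, rfl⟩
      exact hV.OrthogonalFamily hi.symm x y)
  · exact (V i).equivRange.toLinearEquiv.symm.finiteDimensional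
  · rintro _ ⟨x, rfl⟩
    exact ⟨x, (permuteSummands_apply hV π i x).symm⟩

end HilbertSum

section Diagonal

theorem exists_int_recursion {α : Type*} [Nonempty α] (f : ℤ → Equiv.Perm α) :
    ∃ d : ℤ → α, ∀ n, d (n + 1) = f n (d n) := by
  let d (n : ℤ) : α := Int.inductionOn' (motive := fun _ => α) n 0 (Classical.arbitrary α)
    (fun k _ x => f k x) fun k _ x => (f (k - 1)).symm x
  refine ⟨d, fun n => ?_⟩
  rcases le_or_gt 0 n with hn | hn
  · exact Int.inductionOn'_add_one hn
  · have hpred (k : ℤ) (hk : k ≤ 0) : d (k - 1) = (f (k - 1)).symm (d k) :=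
      Int.inductionOn'_sub_one hk
    have h := hpred (n + 1) hn
    rw [add_sub_cancel_right] at h
    rw [h, Equiv.apply_symm_apply]

variable {𝕜 G H : Type*} [RCLike 𝕜] [NormedAddCommGroup G] [InnerProductSpace 𝕜 G]
  [NormedAddCommGroup H] [InnerProductSpace 𝕜 H]

theorem exists_conj_of_map_range_eq (V : G →ₗᵢ[𝕜] H) (u : H ≃ₗᵢ[𝕜] H)
    (hu : (LinearMap.range V.toLinearMap).map (u.toLinearEquiv : H →ₗ[𝕜] H) =
      LinearMap.range V.toLinearMap) :
    ∃ T : G ≃ₗᵢ[𝕜] G, ∀ x, V (T x) = u (V x) := by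
  let T := V.equivRange.trans ((u.submoduleMap _).trans
    ((LinearIsometryEquiv.ofEq _ _ hu).trans V.equivRange.symm))
  refine ⟨T, fun x => ?_⟩
  have h : V.equivRange (T x) =
      LinearIsometryEquiv.ofEq _ _ hu (u.submoduleMap _ (V.equivRange x)) :=
    V.equivRange.apply_symm_apply _
  exact congrArg Subtype.val h

variable [CompleteSpace G] [CompleteSpace H]

theorem exists_balancedSymmetries_of_isHilbertSum_int (hG : ¬ FiniteDimensional 𝕜 G)
    {V : ℤ → G →ₗᵢ[𝕜] H} (hV : IsHilbertSum 𝕜 (fun _ : ℤ => G) V) {u : H ≃ₗᵢ[𝕜] H}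
    (hu : ∀ n, (LinearMap.range (V n).toLinearMap).map (u.toLinearEquiv : H →ₗ[𝕜] H) =
      LinearMap.range (V n).toLinearMap) :
    ∃ s₁ s₂ s₃ s₄ : H ≃ₗᵢ[𝕜] H, u = s₁ * s₂ * s₃ * s₄ ∧
      ∀ s ∈ ({s₁, s₂, s₃, s₄} : Set (H ≃ₗᵢ[𝕜] H)), IsBalancedSymmetry s := by
  choose T hT using fun n => exists_conj_of_map_range_eq (V n) u (hu n)
  obtain ⟨d, hd⟩ := exists_int_recursion fun n => Equiv.mulLeft (T (n + 1))
  have hV' := isHilbertSum_comp_equiv hV (.refl ℤ) d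
  let r : Equiv.Perm ℤ := Equiv.neg ℤ
  let t : Equiv.Perm ℤ := Equiv.subLeft (-1)
  have hr : r * r = 1 := Equiv.ext fun n => neg_neg n
  have ht : t * t = 1 := Equiv.ext fun n => sub_sub_cancel (-1) n
  have hshift (n : ℤ) : (r * t) n = n + 1 := show -(-1 - n) = n + 1 by ring
  have huP : u * permuteSummands hV (r * t) = permuteSummands hV' (r * t) := by
    refine linearIsometryEquiv_ext_of_isHilbertSum hV' fun n x => ?_
    rw [permuteSummands_apply]
    simp [hshift, hd, hT]
  have hinv : permuteSummands hV (r * t) * permuteSummands hV (t * r) = 1 := by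
    rw [← permuteSummands_mul, mul_assoc, ← mul_assoc t, ht, one_mul, hr, permuteSummands_one]
  refine ⟨permuteSummands hV' r, permuteSummands hV' t, permuteSummands hV t,
    permuteSummands hV r, ?_, ?_⟩
  · rw [← permuteSummands_mul, ← huP, mul_assoc, mul_assoc, ← permuteSummands_mul, hinv, mul_one]
  · have hr1 : r 1 ≠ 1 := by decide
    have ht0 : t 0 ≠ 0 := by decide
    rintro s (rfl | rfl | rfl | rfl)
    · exact isBalancedSymmetry_permuteSummands hV' hG hr hr1
    · exact isBalancedSymmetry_permuteSummands hV' hG ht ht0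
    · exact isBalancedSymmetry_permuteSummands hV hG ht ht0
    · exact isBalancedSymmetry_permuteSummands hV hG hr hr1

end Diagonal

section Regrouping

theorem topologicalClosure_map_linearIsometryEquiv {𝕜 E F : Type*} [NormedField 𝕜]
    [SeminormedAddCommGroup E] [NormedSpace 𝕜 E] [SeminormedAddCommGroup F] [NormedSpace 𝕜 F]
    (u : E ≃ₗᵢ[𝕜] F) (K : Submodule 𝕜 E) :
    K.topologicalClosure.map (u.toLinearEquiv : E →ₗ[𝕜] F) =
      (K.map (u.toLinearEquiv : E →ₗ[𝕜] F)).topologicalClosure :=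
  SetLike.coe_injective (u.toHomeomorph.image_closure K)

theorem nonempty_equiv_sigma_of_countable {ι : Type*} [Infinite ι] (F : ι → Type*)
    [∀ i, Countable (F i)] [∀ i, Nonempty (F i)] : Nonempty (ι ≃ Σ i, F i) := by
  obtain ⟨e⟩ : Nonempty (ι × ℕ ≃ ι) := Cardinal.eq.1 (by simp)
  choose f hf using fun i => exists_injective_nat (F i)
  let toSigma : ι ↪ Σ i, F i :=
    ⟨fun i => ⟨i, Classical.arbitrary _⟩, fun i j h => congrArg Sigma.fst h⟩
  let ofSigma : (Σ i, F i) ↪ ι :=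
    ((Function.Embedding.sigmaMap (.refl ι) fun i => ⟨f i, hf i⟩).trans
      (Equiv.sigmaEquivProd ι ℕ).toEmbedding).trans e.toEmbedding
  exact Function.Embedding.antisymm toSigma ofSigma

variable {𝕜 H : Type*} [RCLike 𝕜] [NormedAddCommGroup H] [InnerProductSpace 𝕜 H]

theorem countable_of_orthonormal [TopologicalSpace.SeparableSpace H] {ι : Type*} {v : ι → H}
    (hv : Orthonormal 𝕜 v) : Countable ι := by
  refine Pairwise.countable_of_isOpen_disjoint (s := fun i => Metric.ball (v i) (1 / 2)) ?_
    (fun _ => Metric.isOpen_ball) fun i => ⟨v i, Metric.mem_ball_self (by norm_num)⟩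
  intro i j hij
  have h := norm_sub_sq (𝕜 := 𝕜) (v i) (v j)
  rw [hv.2 hij, hv.1 i, hv.1 j, map_zero] at h
  refine Metric.ball_disjoint_ball ?_
  rw [dist_eq_norm]
  nlinarith [norm_nonneg (v i - v j)]

theorem nonempty_of_hilbertBasis [Nontrivial H] {ι : Type*} (b : HilbertBasis ι 𝕜 H) :
    Nonempty ι := by
  by_contra h
  rw [not_nonempty_iff] at h
  have : Subsingleton H := b.repr.toEquiv.subsingleton
  exact not_subsingleton H this

theorem not_finiteDimensional_lp {ι : Type*} [Infinite ι] :
    ¬ FiniteDimensional 𝕜 (lp (fun _ : ι => 𝕜) 2) := fun _ =>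
  let b : HilbertBasis ι 𝕜 (lp (fun _ : ι => 𝕜) 2) := .ofRepr (.refl 𝕜 _)
  not_finite_iff_infinite.2 ‹_› b.orthonormal.linearIndependent.finite

theorem le_topologicalClosure_span_of_hilbertBasis {K : Submodule 𝕜 H} {ι : Type*}
    (b : HilbertBasis ι 𝕜 K) : K ≤ (span 𝕜 (range fun i => (b i : H))).topologicalClosure := by
  have h := topologicalClosure_map K.subtypeL (span 𝕜 (range b))
  rwa [b.dense_span, map_span, ← range_comp, Submodule.map_top, toLinearMap_subtypeL,
    range_subtype] at h

variable [CompleteSpace H]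

theorem exists_linearIsometry_lp_range_eq {ι : Type*} [Infinite ι] {K : ι → Submodule 𝕜 H}
    [∀ i, CompleteSpace (K i)] [∀ i, TopologicalSpace.SeparableSpace (K i)]
    [∀ i, Nontrivial (K i)] (hK : Pairwise fun i j => K i ⟂ K j) :
    ∃ V : lp (fun _ : ι => 𝕜) 2 →ₗᵢ[𝕜] H,
      LinearMap.range V.toLinearMap = (⨆ i, K i).topologicalClosure := by
  choose w b _ using fun i => exists_hilbertBasis 𝕜 (K i)
  have (i : ι) : Countable (w i) := countable_of_orthonormal (b i).orthonormal
  have (i : ι) : Nonempty (w i) := nonempty_of_hilbertBasis (b i)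
  obtain ⟨σ⟩ := nonempty_equiv_sigma_of_countable fun i => w i
  let v : (Σ i, w i) → H := fun p => b p.1 p.2
  have hv : Orthonormal 𝕜 v := (OrthogonalFamily.of_pairwise hK).orthonormal_sigma_orthonormal
    fun i => (b i).orthonormal
  have hvσ := hv.comp σ σ.injective
  refine ⟨hvσ.orthogonalFamily.linearIsometry, hvσ.orthogonalFamily.range_linearIsometry.trans ?_⟩
  have hspan : ⨆ i, LinearMap.range (LinearIsometry.toSpanSingleton 𝕜 H (hvσ.1 i)).toLinearMap =
      span 𝕜 (range v) := by
    rw [← σ.surjective.range_comp v, span_range_eq_iSup]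
    simp [LinearMap.span_singleton_eq_range]
  rw [hspan]
  refine le_antisymm (topologicalClosure_mono (span_le.2 ?_))
    (topologicalClosure_minimal _ (iSup_le fun i => ?_) (isClosed_topologicalClosure _))
  · rintro _ ⟨⟨i, x⟩, rfl⟩
    exact mem_iSup_of_mem i (b i x).2
  · refine (le_topologicalClosure_span_of_hilbertBasis (b i)).trans
      (topologicalClosure_mono (span_mono ?_))
    rintro _ ⟨x, rfl⟩
    exact ⟨⟨i, x⟩, rfl⟩

theorem exists_isHilbertSum_lp {ι κ : Type*} [Infinite ι] {K : ι × κ → Submodule 𝕜 H}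
    [∀ p, CompleteSpace (K p)] [∀ p, TopologicalSpace.SeparableSpace (K p)]
    [∀ p, Nontrivial (K p)] (hK : Pairwise fun p q => K p ⟂ K q)
    (htotal : (⨆ p, K p).topologicalClosure = ⊤) :
    ∃ V : κ → lp (fun _ : ι => 𝕜) 2 →ₗᵢ[𝕜] H,
      IsHilbertSum 𝕜 (fun _ : κ => lp (fun _ : ι => 𝕜) 2) V ∧
        ∀ n, LinearMap.range (V n).toLinearMap = (⨆ i, K (i, n)).topologicalClosure := by
  choose V hV using fun n : κ => exists_linearIsometry_lp_range_eq (K := fun i => K (i, n))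
    fun i j hij => hK (by simpa using hij)
  have hortho (m n : κ) (hmn : m ≠ n) :
      (⨆ i, K (i, m)).topologicalClosure ⟂ (⨆ i, K (i, n)).topologicalClosure := by
    rw [isOrtho_iff_le, orthogonal_closure]
    refine topologicalClosure_minimal _ ?_ (isClosed_orthogonal _)
    exact isOrtho_iSup_left.2 fun i => isOrtho_iSup_right.2 fun j => hK (by simp [hmn])
  refine ⟨V, IsHilbertSum.mk (fun m n hmn x y => ?_) ?_, hV⟩
  · refine isOrtho_iff_inner_eq.1 (hortho m n hmn) _ ?_ _ ?_
    · exact (hV m).le ⟨x, rfl⟩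
    · exact (hV n).le ⟨y, rfl⟩
  · rw [← htotal]
    refine topologicalClosure_mono (iSup_le fun p => ?_)
    refine le_trans ?_ (le_iSup (fun n => LinearMap.range (V n).toLinearMap) p.2)
    rw [hV]
    exact (le_iSup (fun i => K (i, p.2)) p.1).trans (le_topologicalClosure _)

end Regrouping

section CyclicSubspace

variable {𝕜 H A : Type*} [RCLike 𝕜] [NormedAddCommGroup H] [InnerProductSpace 𝕜 H]
  [CompleteSpace H] [Ring A] [Algebra 𝕜 A] [Star A] (φ : A →⋆ₐ[𝕜] (H →L[𝕜] H))

/-- The cyclic subspace generated by a vector `v` under a representation `φ` of a `*`-algebra on a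
Hilbert space: the closure of `{φ a v | a ∈ A}`. -/
noncomputable def cyclicSubspace (v : H) : Submodule 𝕜 H :=
  (LinearMap.range ((ContinuousLinearMap.apply 𝕜 H v : (H →L[𝕜] H) →ₗ[𝕜] H) ∘ₗ
    φ.toAlgHom.toLinearMap)).topologicalClosure

instance (v : H) : CompleteSpace (cyclicSubspace φ v) :=
  (isClosed_topologicalClosure _).completeSpace_coe

variable {φ} {v w : H}

theorem apply_mem_cyclicSubspace (a : A) (v : H) : φ a v ∈ cyclicSubspace φ v :=
  le_topologicalClosure _ ⟨a, rfl⟩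

theorem self_mem_cyclicSubspace (v : H) : v ∈ cyclicSubspace φ v := by
  simpa using apply_mem_cyclicSubspace (φ := φ) 1 v

theorem cyclicSubspace_le {K : Submodule 𝕜 H} (hK : IsClosed (K : Set H))
    (h : ∀ a, φ a v ∈ K) : cyclicSubspace φ v ≤ K := by
  refine topologicalClosure_minimal _ ?_ hK
  rintro _ ⟨a, rfl⟩
  exact h a

theorem map_cyclicSubspace_le (a : A) :
    (cyclicSubspace φ v).map (φ a : H →ₗ[𝕜] H) ≤ cyclicSubspace φ v := by
  refine map_le_iff_le_comap.2 (cyclicSubspace_le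
    ((isClosed_topologicalClosure _).preimage (φ a).continuous) fun b => ?_)
  have h := apply_mem_cyclicSubspace (φ := φ) (a * b) v
  rwa [map_mul] at h

theorem map_cyclicSubspace_eq_of_apply_eq {u : H ≃ₗᵢ[𝕜] H} {a : A}
    (ha : φ a = (u : H →L[𝕜] H)) :
    (cyclicSubspace φ v).map (u.toLinearEquiv : H →ₗ[𝕜] H) = cyclicSubspace φ v := by
  have ha' : φ (star a) = (u.symm : H →L[𝕜] H) := by
    rw [map_star, ha, ContinuousLinearMap.star_eq_adjoint, LinearIsometryEquiv.adjoint_eq_symm]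
  have hu := map_cyclicSubspace_le (φ := φ) (v := v) a
  have hu' := map_cyclicSubspace_le (φ := φ) (v := v) (star a)
  rw [ha] at hu
  rw [ha'] at hu'
  refine le_antisymm hu fun x hx => ⟨u.symm x, hu' ⟨x, hx, rfl⟩, u.apply_symm_apply x⟩

theorem isOrtho_cyclicSubspace (h : ∀ a, ⟪φ a v, w⟫_𝕜 = 0) :
    cyclicSubspace φ v ⟂ cyclicSubspace φ w := by
  have hv : cyclicSubspace φ v ≤ (𝕜 ∙ w)ᗮ := cyclicSubspace_le (isClosed_orthogonal _) fun a =>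
    mem_orthogonal_singleton_iff_inner_left.2 (h a)
  rw [isOrtho_comm]
  refine cyclicSubspace_le (isClosed_orthogonal _) fun a x hx => ?_
  have hx' : φ (star a) x ∈ cyclicSubspace φ v :=
    map_cyclicSubspace_le _ (Submodule.mem_map_of_mem hx)
  rw [← ContinuousLinearMap.adjoint_inner_left, ← ContinuousLinearMap.star_eq_adjoint, ← map_star]
  exact mem_orthogonal_singleton_iff_inner_left.1 (hv hx')

theorem isOrtho_cyclicSubspace_apply {a b : A} (h : ∀ c, star b * (c * a) = 0) (v w : H) :
    cyclicSubspace φ (φ a v) ⟂ cyclicSubspace φ (φ b w) := by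
  refine isOrtho_cyclicSubspace fun c => ?_
  rw [← ContinuousLinearMap.adjoint_inner_left, ← ContinuousLinearMap.star_eq_adjoint, ← map_star]
  have hzero := congrArg (fun T : H →L[𝕜] H => T v) (congrArg φ (h c))
  simp only [map_mul, map_zero] at hzero
  exact (congrArg (⟪·, w⟫_𝕜) hzero).trans (inner_zero_left w)

theorem cyclicSubspace_ne_bot (hv : v ≠ 0) : cyclicSubspace φ v ≠ ⊥ :=
  (Submodule.ne_bot_iff _).2 ⟨v, self_mem_cyclicSubspace v, hv⟩

theorem separableSpace_cyclicSubspace [TopologicalSpace A] [TopologicalSpace.SeparableSpace A]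
    (hφ : Continuous φ) (v : H) : TopologicalSpace.SeparableSpace (cyclicSubspace φ v) :=
  (TopologicalSpace.isSeparable_range
    ((ContinuousLinearMap.apply 𝕜 H v).continuous.comp hφ)).closure.separableSpace

instance [FiniteDimensional 𝕜 A] (v : H) : FiniteDimensional 𝕜 (cyclicSubspace φ v) := by
  rw [cyclicSubspace, IsClosed.submodule_topologicalClosure_eq (closed_of_finiteDimensional _)]
  infer_instance

theorem finiteDimensional_of_iSup_cyclicSubspace [FiniteDimensional 𝕜 A] {S : Set H}
    (hS : S.Finite) (htotal : (⨆ v : S, cyclicSubspace φ (v : H)).topologicalClosure = ⊤) :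
    FiniteDimensional 𝕜 H := by
  have := hS.to_subtype
  rw [IsClosed.submodule_topologicalClosure_eq (closed_of_finiteDimensional _)] at htotal
  refine Module.finite_def.2 ?_
  rw [← htotal, ← Module.Finite.iff_fg]
  infer_instance

theorem exists_superset_iSup_cyclicSubspace_dense {S₀ : Set H} (h0 : 0 ∉ S₀)
    (hS₀ : S₀.Pairwise fun v w => cyclicSubspace φ v ⟂ cyclicSubspace φ w) :
    ∃ S : Set H, S₀ ⊆ S ∧ 0 ∉ S ∧
      (S.Pairwise fun v w => cyclicSubspace φ v ⟂ cyclicSubspace φ w) ∧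
      (⨆ v : S, cyclicSubspace φ (v : H)).topologicalClosure = ⊤ := by
  obtain ⟨S, hsub, ⟨hS0, hS⟩, hmax⟩ := zorn_subset_nonempty
    {S : Set H | 0 ∉ S ∧ S.Pairwise fun v w => cyclicSubspace φ v ⟂ cyclicSubspace φ w}
    (fun c hc hchain _ => ⟨⋃₀ c, ⟨fun ⟨s, hs, hs0⟩ => (hc hs).1 hs0,
      (pairwise_sUnion hchain.directedOn).2 fun s hs => (hc hs).2⟩,
      fun s hs => subset_sUnion_of_mem hs⟩) S₀ ⟨h0, hS₀⟩
  refine ⟨S, hsub, hS0, hS, ?_⟩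
  rw [topologicalClosure_eq_top_iff, eq_bot_iff]
  intro x hx
  by_contra hx0
  have hortho : ∀ v ∈ S, cyclicSubspace φ v ⟂ cyclicSubspace φ x := fun v hv =>
    isOrtho_cyclicSubspace fun a =>
      hx _ (mem_iSup_of_mem (⟨v, hv⟩ : S) (apply_mem_cyclicSubspace a v))
  have hxS : x ∈ S := hmax (y := insert x S)
    ⟨by simpa [eq_comm] using ⟨hx0, hS0⟩,
      pairwise_insert.2 ⟨hS, fun v hv _ => ⟨(hortho v hv).symm, hortho v hv⟩⟩⟩
    (subset_insert x S) (mem_insert x S)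
  exact cyclicSubspace_ne_bot hx0 (isOrtho_self.1 (hortho x hxS))

theorem exists_infinite_pairwise_isOrtho_cyclicSubspace {f : ℕ → A} (hf : ∀ n, φ (f n) ≠ 0)
    (hfortho : ∀ m n, m ≠ n → ∀ a, star (f n) * (a * f m) = 0) :
    ∃ S : Set H, S.Infinite ∧ 0 ∉ S ∧
      S.Pairwise fun v w => cyclicSubspace φ v ⟂ cyclicSubspace φ w := by
  choose x hx using fun n => ContinuousLinearMap.exists_ne_zero (hf n)
  have hortho (m n : ℕ) (hmn : m ≠ n) :
      cyclicSubspace φ (φ (f m) (x m)) ⟂ cyclicSubspace φ (φ (f n) (x n)) :=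
    isOrtho_cyclicSubspace_apply (hfortho m n hmn) _ _
  have hinj : Function.Injective fun n => φ (f n) (x n) := fun m n hmn => by
    by_contra hne
    have h := hortho m n hne
    simp only at hmn
    rw [hmn, isOrtho_self] at h
    exact cyclicSubspace_ne_bot (hx n) h
  refine ⟨range fun n => φ (f n) (x n), infinite_range_of_injective hinj, ?_,
    Pairwise.range_pairwise fun m n hmn => hortho m n hmn⟩
  rintro ⟨n, hn⟩
  exact hx n hn

end CyclicSubspace

section ContinuousFunctions

variable {𝕜 X : Type*} [RCLike 𝕜] [TopologicalSpace X]

theorem exists_seq_continuousMap_star_mul_eq_zero [T4Space X] [Infinite X] :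
    ∃ f : ℕ → C(X, 𝕜), (∀ n, f n ≠ 0) ∧ ∀ m n, m ≠ n → star (f m) * f n = 0 := by
  obtain ⟨U, hUinf, hUo, hUd⟩ := exists_seq_infinite_isOpen_pairwise_disjoint X
  have hbump (n : ℕ) : ∃ f : C(X, 𝕜), f ≠ 0 ∧ ∀ x ∉ U n, f x = 0 := by
    obtain ⟨p, hp⟩ := (hUinf n).nonempty
    obtain ⟨f, hf0, hf1, -⟩ := exists_continuous_zero_one_of_isClosed (hUo n).isClosed_compl
      (isClosed_singleton (x := p)) (by simpa using hp)
    refine ⟨⟨fun x => (f x : 𝕜), by fun_prop⟩, fun h => ?_, fun x hx => ?_⟩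
    · have hfp : f p = 1 := hf1 rfl
      have := DFunLike.congr_fun h p
      simp [hfp] at this
    · have hfx : f x = 0 := hf0 hx
      simp [hfx]
  choose f hf0 hfU using hbump
  refine ⟨f, hf0, fun m n hmn => ?_⟩
  ext x
  by_cases hx : x ∈ U m
  · simp [hfU n x (disjoint_left.1 (hUd hmn) hx)]
  · simp [hfU m x hx]

variable {H : Type*} [NormedAddCommGroup H] [InnerProductSpace 𝕜 H] [CompleteSpace H]

theorem exists_infinite_iSup_cyclicSubspace_dense [CompactSpace X] [T2Space X]
    (hH : ¬ FiniteDimensional 𝕜 H) {φ : C(X, 𝕜) →⋆ₐ[𝕜] (H →L[𝕜] H)}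
    (hφ : Function.Injective φ) :
    ∃ S : Set H, S.Infinite ∧ 0 ∉ S ∧
      (S.Pairwise fun v w => cyclicSubspace φ v ⟂ cyclicSubspace φ w) ∧
      (⨆ v : S, cyclicSubspace φ (v : H)).topologicalClosure = ⊤ := by
  rcases finite_or_infinite X with hX | hX
  · have : FiniteDimensional 𝕜 C(X, 𝕜) :=
      FiniteDimensional.of_injective (ContinuousMap.coeFnLinearMap 𝕜) DFunLike.coe_injective
    obtain ⟨S, -, h0, hS, htotal⟩ :=
      exists_superset_iSup_cyclicSubspace_dense (φ := φ) (notMem_empty 0) (pairwise_empty _)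
    exact ⟨S, fun hfin => hH (finiteDimensional_of_iSup_cyclicSubspace hfin htotal), h0, hS, htotal⟩
  · obtain ⟨f, hf0, hf⟩ := exists_seq_continuousMap_star_mul_eq_zero (𝕜 := 𝕜) (X := X)
    obtain ⟨S₀, hinf, h0, hS₀⟩ := exists_infinite_pairwise_isOrtho_cyclicSubspace
      (φ := φ) (fun n => (map_ne_zero_iff φ hφ).2 (hf0 n)) fun m n hmn a => by
        rw [mul_left_comm, hf n m hmn.symm, mul_zero]
    obtain ⟨S, hsub, h⟩ := exists_superset_iSup_cyclicSubspace_dense h0 hS₀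
    exact ⟨S, hinf.mono hsub, h⟩

theorem exists_isHilbertSum_lp_map_range_eq [CompactSpace X] [T2Space X]
    [TopologicalSpace.SeparableSpace C(X, 𝕜)] (hH : ¬ FiniteDimensional 𝕜 H)
    {φ : C(X, 𝕜) →⋆ₐ[𝕜] (H →L[𝕜] H)} (hφ : Function.Injective φ) (hφc : Continuous φ)
    {u : H ≃ₗᵢ[𝕜] H} {f : C(X, 𝕜)} (hu : φ f = (u : H →L[𝕜] H)) :
    ∃ (S : Set H) (V : ℤ → lp (fun _ : S => 𝕜) 2 →ₗᵢ[𝕜] H), S.Infinite ∧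
      IsHilbertSum 𝕜 (fun _ : ℤ => lp (fun _ : S => 𝕜) 2) V ∧
        ∀ n, (LinearMap.range (V n).toLinearMap).map (u.toLinearEquiv : H →ₗ[𝕜] H) =
          LinearMap.range (V n).toLinearMap := by
  obtain ⟨S, hinf, h0, hS, htotal⟩ := exists_infinite_iSup_cyclicSubspace_dense hH hφ
  have := hinf.to_subtype
  obtain ⟨e⟩ : Nonempty (S × ℤ ≃ S) := Cardinal.eq.1 (by simp)
  let K (p : S × ℤ) : Submodule 𝕜 H := cyclicSubspace φ (e p : H)
  have (p : S × ℤ) : TopologicalSpace.SeparableSpace (K p) := separableSpace_cyclicSubspace hφc _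
  have (p : S × ℤ) : Nontrivial (K p) := nontrivial_iff_ne_bot.2 <|
    cyclicSubspace_ne_bot fun h => h0 (h ▸ (e p).2)
  have hK : Pairwise fun p q => K p ⟂ K q := fun p q hpq =>
    hS (e p).2 (e q).2 (Subtype.coe_ne_coe.2 (e.injective.ne hpq))
  have hKtotal : (⨆ p, K p).topologicalClosure = ⊤ := by
    rw [← htotal]
    exact congrArg _ (e.iSup_comp (g := fun v : S => cyclicSubspace φ (v : H)))
  obtain ⟨V, hV, hrange⟩ := exists_isHilbertSum_lp hK hKtotal
  refine ⟨S, V, hinf, hV, fun n => ?_⟩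
  rw [hrange, topologicalClosure_map_linearIsometryEquiv, Submodule.map_iSup]
  exact congrArg _ (iSup_congr fun v => map_cyclicSubspace_eq_of_apply_eq hu)

end ContinuousFunctions

/-- **Halmos–Kakutani.** Every unitary operator on an infinite-dimensional complex Hilbert
space is a product of four symmetries (unitary involutions), each of which can be chosen
so that both of its eigenspaces, for the eigenvalues `1` and `-1`, are
infinite-dimensional. -/
theorem unitary_eq_prod_four_symmetries
    {H : Type*} [NormedAddCommGroup H] [InnerProductSpace ℂ H] [CompleteSpace H]
    (hinf : ¬ FiniteDimensional ℂ H) (u : H ≃ₗᵢ[ℂ] H) :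
    ∃ s₁ s₂ s₃ s₄ : H ≃ₗᵢ[ℂ] H, u = s₁ * s₂ * s₃ * s₄ ∧
      ∀ s ∈ ({s₁, s₂, s₃, s₄} : Set (H ≃ₗᵢ[ℂ] H)),
        s * s = 1 ∧
        ¬ FiniteDimensional ℂ
          (LinearMap.ker ((s.toLinearEquiv : H →ₗ[ℂ] H) - LinearMap.id)) ∧
        ¬ FiniteDimensional ℂ
          (LinearMap.ker ((s.toLinearEquiv : H →ₗ[ℂ] H) + LinearMap.id)) := by
  have hu : IsStarNormal (u : H →L[ℂ] H) :=
    inferInstanceAs (IsStarNormal ((Unitary.linearIsometryEquiv.symm u : unitary (H →L[ℂ] H)) :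
      H →L[ℂ] H))
  obtain ⟨S, V, hS, hV, hVu⟩ := exists_isHilbertSum_lp_map_range_eq hinf
    (cfcHom_injective hu) (cfcHom_continuous hu) (cfcHom_id hu)
  have := hS.to_subtype
  obtain ⟨s₁, s₂, s₃, s₄, hprod, hs⟩ :=
    exists_balancedSymmetries_of_isHilbertSum_int not_finiteDimensional_lp hV hVu
  exact ⟨s₁, s₂, s₃, s₄, hprod, fun s hmem => ⟨(hs s hmem).mul_self,
    (hs s hmem).not_finiteDimensional_ker_sub, (hs s hmem).not_finiteDimensional_ker_add⟩⟩
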